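/- Let α∈ℝ with |α|≤1 and for integers r,s define c_α(r,s)=∫_{−1/2}^{1/2}∫_{−1/2}^{1/2} sign(ξ+αη) e^{2πi(rξ+sη)} dξ dη. Then: (i) for r≠0, c_α(r,s) = −(1/(πir))·( sinc(−αr+s) − (−1)^r·1_{{s=0}} ); (ii) for r=0 and s≠0, c_α(0,s) = −(α/(πis))·( sinc(s) − cos(πs) ); and (iii) c_α(0,0)=0. Here sinc(x)=sin(πx)/(πx) for x≠0 and sinc(0)=1, and 1_{{s=0}} equals 1 if s=0 and 0 otherwise. -/

import Mathlib

open MeasureTheory Complex SchwartzMap Filter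
open scoped FourierTransform ENNReal NNReal Real

/-- The distribution function of an `ℝ≥0∞`-valued function. -/
noncomputable def distFn {X : Type*} [MeasurableSpace X] (μ : Measure X)
    (f : X → ℝ≥0∞) (t : ℝ) : ℝ≥0∞ :=
  μ {x | ENNReal.ofReal t < f x}

/-- The Lorentz `L^{p,q}` quasinorm, defined via the distribution function. -/
noncomputable def lorentzNorm {X : Type*} [MeasurableSpace X] (μ : Measure X)
    (p q : ℝ≥0∞) (f : X → ℝ≥0∞) : ℝ≥0∞ :=
  if q = ∞ then ⨆ t ∈ Set.Ioi (0 : ℝ), ENNReal.ofReal t * distFn μ f t ^ (1 / p.toReal)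
  else (q * ∫⁻ t in Set.Ioi (0 : ℝ),
      ENNReal.ofReal (t ^ (q.toReal - 1)) * distFn μ f t ^ (q.toReal / p.toReal)) ^ (1 / q.toReal)

/-- The Lorentz `L^{p,q}` quasinorm of a complex-valued function. -/
noncomputable def lorentzNormC {X : Type*} [MeasurableSpace X] (μ : Measure X)
    (p q : ℝ≥0∞) (f : X → ℂ) : ℝ≥0∞ :=
  lorentzNorm μ p q fun x => (‖f x‖₊ : ℝ≥0∞)

/-- A function is locally bounded if it is bounded on every compact set. -/
def LocallyBounded (m : ℝ × ℝ → ℂ) : Prop :=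
  ∀ K : Set (ℝ × ℝ), IsCompact K → ∃ C : ℝ, ∀ z ∈ K, ‖m z‖ ≤ C

/-- The bilinear multiplier operator `C_m`. -/
noncomputable def Cm (m : ℝ × ℝ → ℂ) (f g : 𝓢(ℝ, ℂ)) (x : ℝ) : ℂ :=
  ∫ ξ : ℝ, ∫ η : ℝ, 𝓕 (f : ℝ → ℂ) ξ * 𝓕 (g : ℝ → ℂ) η * m (ξ, η) *
    Complex.exp (2 * Real.pi * Complex.I * (x : ℂ) * ((ξ : ℂ) + (η : ℂ)))

/-- The trigonometric polynomial with coefficients `a`. -/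
noncomputable def trigP (a : ℤ → ℂ) (ξ : ℝ) : ℂ :=
  ∑ᶠ k : ℤ, a k * Complex.exp (-(2 * Real.pi) * Complex.I * (k : ℂ) * (ξ : ℂ))

/-- The discrete bilinear operator `D_{m̃_{t,p}}`. -/
noncomputable def Dop (m : ℝ × ℝ → ℂ) (t p : ℝ) (a b : ℤ → ℂ) (n : ℤ) : ℂ :=
  ((t ^ (1 / p) : ℝ) : ℂ) *
    ∫ ξ in Set.Icc (-(1/2) : ℝ) (1/2), ∫ η in Set.Icc (-(1/2) : ℝ) (1/2),
      trigP a ξ * trigP b η * m (t * ξ, t * η) *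
        Complex.exp (2 * Real.pi * Complex.I * (n : ℂ) * ((ξ : ℂ) + (η : ℂ)))

/-- `InER R f` : `f` is (a representative of) a tempered distribution of exponential type,
i.e. a continuous function of polynomial growth whose distributional Fourier transform is
supported in `[-R, R]`. -/
def InER (R : ℝ) (f : ℝ → ℂ) : Prop :=
  Continuous f ∧ (∃ (C : ℝ) (k : ℕ), ∀ x : ℝ, ‖f x‖ ≤ C * (1 + |x|) ^ k) ∧
  ∀ φ : 𝓢(ℝ, ℂ), Disjoint (tsupport (φ : ℝ → ℂ)) (Set.Icc (-R) R) →
    ∫ x : ℝ, f x * 𝓕 (φ : ℝ → ℂ) x = 0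

/-- The discrete bilinear Hilbert transform. -/
noncomputable def bhtZ (α : ℤ) (a b : ℤ → ℂ) (n : ℤ) : ℂ :=
  ((Real.pi : ℂ))⁻¹ * ∑ᶠ (k : ℤ) (_ : k ≠ 0), a (n - k) * b (n - α * k) * (k : ℂ)⁻¹

/-- `sinc x = sin (π x) / (π x)`, with `sinc 0 = 1`. -/
noncomputable def mySinc (x : ℝ) : ℝ :=
  if x = 0 then 1 else Real.sin (Real.pi * x) / (Real.pi * x)

/-- The Fourier coefficients of `sign(ξ + αη)` on the unit square. -/
noncomputable def cInt (α : ℝ) (r s : ℤ) : ℂ :=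
  ∫ ξ in Set.Icc (-(1/2) : ℝ) (1/2), ∫ η in Set.Icc (-(1/2) : ℝ) (1/2),
    ((Real.sign (ξ + α * η) : ℝ) : ℂ) *
      Complex.exp (2 * Real.pi * Complex.I * ((r : ℂ) * (ξ : ℂ) + (s : ℂ) * (η : ℂ)))

/-
Integrate in `ξ` first. Since `|α| ≤ 1`, for every `η ∈ [-1/2, 1/2]` the jump `ξ = -αη` of the sign
lies in `[-1/2, 1/2]`, so the inner integral is an explicit combination of `exp (-2πi α r η)` and a
constant if `r ≠ 0`, and equals `2αη` if `r = 0`. The outer integral is then a combination of values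
of `sinc`, respectively an integration by parts. At `r = s = 0` everything cancels because the sign
is odd. The computation is valid at real frequencies, with `cos (π r)` in place of `(-1) ^ r` and
`sinc s` in place of the indicator of `s = 0`.
-/

section Sign

lemma measurable_real_sign : Measurable Real.sign := by
  unfold Real.sign
  exact Measurable.ite measurableSet_Iio measurable_const
    (Measurable.ite measurableSet_Ioi measurable_const measurable_const)

lemma norm_real_sign_le_one (x : ℝ) : ‖Real.sign x‖ ≤ 1 := by
  rcases Real.sign_apply_eq x with h | h | h <;> simp [h]

variable {E : Type*} [NormedAddCommGroup E] [NormedSpace ℝ E] {f : ℝ → E} {a b c : ℝ}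
  {μ : Measure ℝ}

lemma intervalIntegrable_sign_sub_smul (hf : IntervalIntegrable f μ a c) :
    IntervalIntegrable (fun x ↦ Real.sign (x - b) • f x) μ a c := by
  have hsign : Measurable fun x ↦ Real.sign (x - b) :=
    measurable_real_sign.comp (measurable_id.sub_const b)
  exact ⟨hf.1.bdd_smul 1 hsign.aestronglyMeasurable (.of_forall fun _ ↦ norm_real_sign_le_one _),
    hf.2.bdd_smul 1 hsign.aestronglyMeasurable (.of_forall fun _ ↦ norm_real_sign_le_one _)⟩

lemma integral_sign_sub_smul [NullSingletonClass μ] (hab : a ≤ b) (hbc : b ≤ c)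
    (hf : IntervalIntegrable f μ a c) :
    ∫ x in a..c, Real.sign (x - b) • f x ∂μ = (∫ x in b..c, f x ∂μ) - ∫ x in a..b, f x ∂μ := by
  have hb : b ∈ Set.uIcc a c := Set.mem_uIcc_of_le hab hbc
  have hleft : ∫ x in a..b, Real.sign (x - b) • f x ∂μ = ∫ x in a..b, -f x ∂μ :=
    intervalIntegral.integral_congr_Ioo_of_le hab fun x hx ↦ by
      simp [Real.sign_of_neg (sub_neg.2 hx.2)]
  have hright : ∫ x in b..c, Real.sign (x - b) • f x ∂μ = ∫ x in b..c, f x ∂μ :=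
    intervalIntegral.integral_congr_Ioo_of_le hbc fun x hx ↦ by
      simp [Real.sign_of_pos (sub_pos.2 hx.1)]
  have hint : IntervalIntegrable (fun x ↦ Real.sign (x - b) • f x) μ a c :=
    intervalIntegrable_sign_sub_smul hf
  rw [← intervalIntegral.integral_add_adjacent_intervals
      (hint.mono_set (Set.uIcc_subset_uIcc_left hb))
      (hint.mono_set (Set.uIcc_subset_uIcc_right hb)),
    hleft, hright, intervalIntegral.integral_neg, neg_add_eq_sub]

end Sign

section FourierChar

lemma fourierChar_mul_half (w : ℝ) :
    (𝐞 (w * (1 / 2)) : ℂ) = Complex.cos (π * w) + Complex.sin (π * w) * I := by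
  rw [Real.fourierChar_apply, ← Complex.exp_mul_I]
  push_cast
  ring_nf

lemma fourierChar_mul_neg_half (w : ℝ) :
    (𝐞 (w * -(1 / 2)) : ℂ) = Complex.cos (π * w) - Complex.sin (π * w) * I := by
  rw [mul_neg, ← neg_mul, fourierChar_mul_half]
  push_cast
  rw [mul_neg, Complex.cos_neg, Complex.sin_neg]
  ring

lemma two_pi_I_mul_ne_zero {w : ℝ} (hw : w ≠ 0) : 2 * (π : ℂ) * I * w ≠ 0 :=
  mul_ne_zero two_pi_I_ne_zero (ofReal_ne_zero.2 hw)

lemma continuous_fourierChar_mul (w : ℝ) : Continuous fun x : ℝ ↦ (𝐞 (w * x) : ℂ) :=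
  continuous_subtype_val.comp (Real.continuous_fourierChar.comp (continuous_const_mul w))

lemma integral_fourierChar_mul {w : ℝ} (hw : w ≠ 0) (a b : ℝ) :
    ∫ x in a..b, (𝐞 (w * x) : ℂ) = (𝐞 (w * b) - 𝐞 (w * a)) / (2 * π * I * w) := by
  have hexp (x : ℝ) : (𝐞 (w * x) : ℂ) = cexp (2 * π * I * w * x) := by
    rw [Real.fourierChar_apply]
    push_cast
    ring_nf
  simp only [hexp, integral_exp_mul_complex (two_pi_I_mul_ne_zero hw)]

lemma integral_fourierChar_mul_eq_mySinc (w : ℝ) :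
    ∫ x in (-(1 / 2) : ℝ)..(1 / 2), (𝐞 (w * x) : ℂ) = mySinc w := by
  rcases eq_or_ne w 0 with rfl | hw
  · norm_num [mySinc]
  · have hπ : (π : ℂ) ≠ 0 := ofReal_ne_zero.2 Real.pi_ne_zero
    have hw' : (w : ℂ) ≠ 0 := ofReal_ne_zero.2 hw
    rw [integral_fourierChar_mul hw, fourierChar_mul_half, fourierChar_mul_neg_half, mySinc,
      if_neg hw]
    push_cast
    field_simp
    ring

lemma integral_mul_fourierChar_mul {w : ℝ} (hw : w ≠ 0) :
    ∫ x in (-(1 / 2) : ℝ)..(1 / 2), (x : ℂ) * 𝐞 (w * x) =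
      (Complex.cos (π * w) - mySinc w) / (2 * π * I * w) := by
  have hc : 2 * (π : ℂ) * I * w ≠ 0 := two_pi_I_mul_ne_zero hw
  have hderiv (x : ℝ) :
      HasDerivAt (fun x : ℝ ↦ (𝐞 (w * x) : ℂ) / (2 * π * I * w)) (𝐞 (w * x)) x := by
    have hchain := ((Real.hasDerivAt_fourierChar (w * x)).scomp x
      ((hasDerivAt_id x).const_mul w)).div_const (2 * π * I * w)
    convert! hchain using 1
    rw [Complex.real_smul, eq_div_iff hc]
    push_cast
    ring
  rw [intervalIntegral.integral_mul_deriv_eq_deriv_mul (u := fun x : ℝ ↦ (x : ℂ))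
      (fun x _ ↦ (hasDerivAt_id x).ofReal_comp) (fun x _ ↦ hderiv x)
      intervalIntegrable_const ((continuous_fourierChar_mul w).intervalIntegrable _ _)]
  simp only [ofReal_one, one_mul, intervalIntegral.integral_div,
    integral_fourierChar_mul_eq_mySinc, fourierChar_mul_half, fourierChar_mul_neg_half]
  push_cast
  ring

lemma integral_sign_sub_smul_fourierChar {a r : ℝ} (ha : a ∈ Set.Icc (-(1 / 2) : ℝ) (1 / 2))
    (hr : r ≠ 0) :
    ∫ ξ in (-(1 / 2) : ℝ)..(1 / 2), Real.sign (ξ - a) • (𝐞 (r * ξ) : ℂ) =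
      (Complex.cos (π * r) - 𝐞 (r * a)) / (π * I * r) := by
  have hr' : (r : ℂ) ≠ 0 := ofReal_ne_zero.2 hr
  have hπ : (π : ℂ) ≠ 0 := ofReal_ne_zero.2 Real.pi_ne_zero
  rw [integral_sign_sub_smul ha.1 ha.2 ((continuous_fourierChar_mul r).intervalIntegrable _ _),
    integral_fourierChar_mul hr, integral_fourierChar_mul hr, fourierChar_mul_half,
    fourierChar_mul_neg_half]
  field_simp
  ring

end FourierChar

lemma integral_integral_comp_neg_neg {E : Type*} [NormedAddCommGroup E] [NormedSpace ℝ E]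
    (F : ℝ → ℝ → E) (a b c d : ℝ) :
    ∫ x in a..b, ∫ y in c..d, F (-x) (-y) = ∫ x in -b..-a, ∫ y in -d..-c, F x y := by
  calc ∫ x in a..b, ∫ y in c..d, F (-x) (-y)
      = ∫ x in a..b, ∫ y in -d..-c, F (-x) y :=
        intervalIntegral.integral_congr fun x _ ↦ intervalIntegral.integral_comp_neg (F (-x))
    _ = ∫ x in -b..-a, ∫ y in -d..-c, F x y :=
        intervalIntegral.integral_comp_neg fun x ↦ ∫ y in -d..-c, F x y

/-- The Fourier integral of `sign (ξ + α η)` over the square `[-1/2, 1/2]²` at a real frequency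
`(r, s)`; it extends `cInt` from integer to real frequencies. -/
noncomputable def squareSignFourier (α r s : ℝ) : ℂ :=
  ∫ ξ in (-(1 / 2) : ℝ)..(1 / 2), ∫ η in (-(1 / 2) : ℝ)..(1 / 2),
    Real.sign (ξ + α * η) • (𝐞 (r * ξ + s * η) : ℂ)

lemma cInt_eq_squareSignFourier (α : ℝ) (r s : ℤ) : cInt α r s = squareSignFourier α r s := by
  have hle : (-(1 / 2) : ℝ) ≤ 1 / 2 := by norm_num
  have hexp (ξ η : ℝ) : cexp (2 * π * I * (r * ξ + s * η)) = 𝐞 (r * ξ + s * η) := by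
    rw [Real.fourierChar_apply]
    push_cast
    ring_nf
  simp only [cInt, squareSignFourier, integral_Icc_eq_integral_Ioc,
    ← intervalIntegral.integral_of_le hle, hexp, Complex.real_smul]

lemma squareSignFourier_swap (α r s : ℝ) :
    squareSignFourier α r s = ∫ η in (-(1 / 2) : ℝ)..(1 / 2),
      (∫ ξ in (-(1 / 2) : ℝ)..(1 / 2), Real.sign (ξ - -(α * η)) • (𝐞 (r * ξ) : ℂ)) *
        𝐞 (s * η) := by
  have hsign : Measurable fun p : ℝ × ℝ ↦ Real.sign (p.1 + α * p.2) :=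
    measurable_real_sign.comp (by fun_prop)
  have hchar : Continuous fun p : ℝ × ℝ ↦ (𝐞 (r * p.1 + s * p.2) : ℂ) :=
    continuous_subtype_val.comp (Real.continuous_fourierChar.comp (by fun_prop))
  have hbound (p : ℝ × ℝ) :
      ‖Real.sign (p.1 + α * p.2) • (𝐞 (r * p.1 + s * p.2) : ℂ)‖ ≤ 1 := by
    rw [norm_smul, Circle.norm_coe, mul_one]
    exact norm_real_sign_le_one _
  rw [squareSignFourier, intervalIntegral_intervalIntegral_swap]
  · simp only [← intervalIntegral.integral_mul_const, sub_neg_eq_add, AddChar.map_add_eq_mul,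
      Circle.coe_mul, smul_mul_assoc]
  · refine IntegrableOn.of_bound ?_ (hsign.smul hchar.measurable).aestronglyMeasurable 1
      (.of_forall hbound)
    rw [Measure.volume_eq_prod, Measure.prod_prod, Real.volume_uIoc]
    exact ENNReal.mul_lt_top ENNReal.ofReal_lt_top ENNReal.ofReal_lt_top

lemma neg_mul_mem_Icc {α η c : ℝ} (hα : |α| ≤ 1) (hη : η ∈ Set.Icc (-c) c) :
    -(α * η) ∈ Set.Icc (-c) c := by
  have hη' : |η| ≤ c := abs_le.2 hη
  rw [Set.mem_Icc, ← abs_le, abs_neg, abs_mul]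
  exact (mul_le_of_le_one_left (abs_nonneg η) hα).trans hη'

lemma squareSignFourier_of_ne_zero {α : ℝ} (hα : |α| ≤ 1) {r : ℝ} (hr : r ≠ 0) (s : ℝ) :
    squareSignFourier α r s =
      -(1 / (π * I * r)) * (mySinc (-α * r + s) - Complex.cos (π * r) * mySinc s) := by
  have hinner (η : ℝ) (hη : η ∈ Set.uIcc (-(1 / 2) : ℝ) (1 / 2)) :
      (∫ ξ in (-(1 / 2) : ℝ)..(1 / 2), Real.sign (ξ - -(α * η)) • (𝐞 (r * ξ) : ℂ)) * 𝐞 (s * η) =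
        -(1 / (π * I * r)) * (𝐞 ((-α * r + s) * η) - Complex.cos (π * r) * 𝐞 (s * η)) := by
    rw [Set.uIcc_of_le (by norm_num)] at hη
    have hjump : (𝐞 ((-α * r + s) * η) : ℂ) = 𝐞 (r * -(α * η)) * 𝐞 (s * η) := by
      rw [← Circle.coe_mul, ← AddChar.map_add_eq_mul]
      ring_nf
    rw [integral_sign_sub_smul_fourierChar (neg_mul_mem_Icc hα hη) hr, hjump]
    ring
  have hint (w : ℝ) :
      IntervalIntegrable (fun η : ℝ ↦ (𝐞 (w * η) : ℂ)) volume (-(1 / 2)) (1 / 2) :=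
    (continuous_fourierChar_mul w).intervalIntegrable _ _
  rw [squareSignFourier_swap, intervalIntegral.integral_congr hinner,
    intervalIntegral.integral_const_mul,
    intervalIntegral.integral_sub (hint _) ((hint s).const_mul _),
    intervalIntegral.integral_const_mul, integral_fourierChar_mul_eq_mySinc,
    integral_fourierChar_mul_eq_mySinc]

lemma squareSignFourier_zero_left {α : ℝ} (hα : |α| ≤ 1) (s : ℝ) :
    squareSignFourier α 0 s =
      2 * α * ∫ η in (-(1 / 2) : ℝ)..(1 / 2), (η : ℂ) * 𝐞 (s * η) := by
  rw [squareSignFourier_swap, ← intervalIntegral.integral_const_mul]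
  refine intervalIntegral.integral_congr fun η hη ↦ ?_
  rw [Set.uIcc_of_le (by norm_num)] at hη
  have hinner : ∫ ξ in (-(1 / 2) : ℝ)..(1 / 2), Real.sign (ξ - -(α * η)) • (𝐞 (0 * ξ) : ℂ) =
      2 * α * η := by
    obtain ⟨hlo, hhi⟩ := neg_mul_mem_Icc hα hη
    simp only [zero_mul, AddChar.map_zero_eq_one, Circle.coe_one]
    rw [integral_sign_sub_smul hlo hhi intervalIntegrable_const]
    simp only [intervalIntegral.integral_const, Complex.real_smul]
    push_cast
    ring
  simp only [hinner, mul_assoc]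

lemma squareSignFourier_neg_neg (α r s : ℝ) :
    squareSignFourier α (-r) (-s) = -squareSignFourier α r s := by
  have hodd (ξ η : ℝ) : Real.sign (ξ + α * η) • (𝐞 (-r * ξ + -s * η) : ℂ) =
      -(Real.sign (-ξ + α * -η) • (𝐞 (r * -ξ + s * -η) : ℂ)) := by
    rw [mul_neg, ← neg_add, Real.sign_neg, neg_smul, neg_neg]
    ring_nf
  simp only [squareSignFourier, hodd, intervalIntegral.integral_neg]
  rw [integral_integral_comp_neg_neg
    fun ξ η ↦ Real.sign (ξ + α * η) • (𝐞 (r * ξ + s * η) : ℂ), neg_neg]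

lemma squareSignFourier_zero_zero (α : ℝ) : squareSignFourier α 0 0 = 0 := by
  have hodd : squareSignFourier α 0 0 = -squareSignFourier α 0 0 := by
    simpa only [neg_zero] using squareSignFourier_neg_neg α 0 0
  exact self_eq_neg.1 hodd

lemma mySinc_intCast (n : ℤ) : mySinc n = if n = 0 then 1 else 0 := by
  by_cases hn : n = 0
  · simp [mySinc, hn]
  · simp [mySinc, hn, mul_comm π, Real.sin_int_mul_pi]

lemma cos_pi_mul_intCast (n : ℤ) : Complex.cos (π * n) = (-1) ^ n := by
  rw [mul_comm, ← ofReal_intCast, ← ofReal_mul, ← ofReal_cos, Real.cos_int_mul_pi, ofReal_zpow,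
    ofReal_neg, ofReal_one]

theorem stmt15_general (α : ℝ) (hα : |α| ≤ 1) :
    (∀ r s : ℝ, r ≠ 0 →
      squareSignFourier α r s = -(1 / (π * I * r)) *
        (mySinc (-α * r + s) - Complex.cos (π * r) * mySinc s)) ∧
    (∀ s : ℝ, s ≠ 0 →
      squareSignFourier α 0 s = -(α / (π * I * s)) * (mySinc s - Complex.cos (π * s))) ∧
    squareSignFourier α 0 0 = 0 := by
  refine ⟨fun r s hr ↦ squareSignFourier_of_ne_zero hα hr s, fun s hs ↦ ?_,
    squareSignFourier_zero_zero α⟩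
  rw [squareSignFourier_zero_left hα, integral_mul_fourierChar_mul hs]
  have hs' : (s : ℂ) ≠ 0 := ofReal_ne_zero.2 hs
  have hπ : (π : ℂ) ≠ 0 := ofReal_ne_zero.2 Real.pi_ne_zero
  field_simp
  ring

/-- Computation of the Fourier coefficients `c_α(r,s)` of `sign(ξ + αη)` for `|α| ≤ 1`. -/
theorem stmt15 (α : ℝ) (hα : |α| ≤ 1) :
    (∀ r s : ℤ, r ≠ 0 →
      cInt α r s = -(1 / (Real.pi * Complex.I * (r : ℂ))) *
        ((mySinc (-α * r + s) : ℂ) - (-1 : ℂ) ^ r * (if s = 0 then 1 else 0))) ∧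
    (∀ s : ℤ, s ≠ 0 →
      cInt α 0 s = -((α : ℂ) / (Real.pi * Complex.I * (s : ℂ))) *
        ((mySinc s : ℂ) - Complex.cos (Real.pi * (s : ℂ)))) ∧
    cInt α 0 0 = 0 := by
  obtain ⟨hr, hs, h0⟩ := stmt15_general α hα
  refine ⟨fun r s hr0 ↦ ?_, fun s hs0 ↦ ?_, ?_⟩
  · simpa only [cInt_eq_squareSignFourier, mySinc_intCast, ofReal_intCast, cos_pi_mul_intCast,
      apply_ite ofReal, ofReal_one, ofReal_zero] using hr r s (Int.cast_ne_zero.2 hr0)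
  · simpa [cInt_eq_squareSignFourier] using hs s (Int.cast_ne_zero.2 hs0)
  · simpa [cInt_eq_squareSignFourier] using h0
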